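/- arXiv:2512.02149 — 3 statements merged into one kernel-verified Lean document; each statement's English description precedes it below -/
import Mathlib

section
/- Let q ≥ 2, s ≥ 1, and k ≥ 1 be integers. Then ∑_{i=0}^{k−1} ⌈q^(s(k−1)) / q^i⌉ = q^((s−1)(k−1))·(q^k − 1)/(q − 1). Consequently, since q^(s(k−1)) is the minimum Hamming distance of the linear simplex β code S_k^β and the right-hand side is its length L_β(k), the code S_k^β attains the Griesmer bound ∑_{i=0}^{k−1} ⌈d/q^i⌉ ≤ n with equality. -/
/-- For integers `q ≥ 2`, `s ≥ 1`, `k ≥ 1`,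
`∑_{i=0}^{k−1} ⌈q^(s(k−1))/q^i⌉ = q^((s−1)(k−1))·(q^k − 1)/(q − 1)`; the right-hand side is
written via the geometric sum `∑_{i<k} q^i = (q^k − 1)/(q − 1)`. Consequently, since
`q^(s(k−1))` is the minimum Hamming distance of `S_k^β` and the right-hand side is its
length `L_β(k)`, the linear simplex β code attains the Griesmer bound with equality. -/
theorem stmt_17 (q s k : ℕ) (hq : 2 ≤ q) (hs : 1 ≤ s) (hk : 1 ≤ k) :
    ∑ i ∈ Finset.range k, ⌈((q : ℚ) ^ (s * (k - 1)) / (q : ℚ) ^ i)⌉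
      = (q : ℤ) ^ ((s - 1) * (k - 1)) * ∑ i ∈ Finset.range k, (q : ℤ) ^ i := by
  obtain ⟨t, rfl⟩ := Nat.exists_eq_add_of_le' hs
  obtain ⟨m, rfl⟩ := Nat.exists_eq_add_of_le' hk
  have hq0 : (q : ℚ) ≠ 0 := by positivity
  rw [← Finset.sum_range_reflect (fun i => (q : ℤ) ^ i), Finset.mul_sum]
  refine Finset.sum_congr rfl fun i hi => ?_
  have him : i ≤ m := Nat.lt_succ_iff.mp (Finset.mem_range.mp hi)
  simp only [Nat.add_sub_cancel]
  have hdiv : (q : ℚ) ^ ((t + 1) * m) / (q : ℚ) ^ i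
      = (((q : ℤ) ^ (t * m) * (q : ℤ) ^ (m - i) : ℤ) : ℚ) := by
    rw [div_eq_iff (pow_ne_zero _ hq0)]
    push_cast
    rw [mul_assoc, ← pow_add, ← pow_add, Nat.sub_add_cancel him, Nat.succ_mul]
  rw [hdiv, Int.ceil_intCast]
end

section
/- Let q ≥ 2, s ≥ 1, and k ≥ 1 be integers. Then ∑_{i=0}^{k−1} ⌈(q−1)·q^(sk−1) / q^i⌉ = q^(sk) − q^((s−1)k), which is strictly less than q^(sk). Consequently, since (q−1)·q^(sk−1) is the minimum Hamming distance of the linear simplex α code S_k^α and q^(sk) is its length, the code S_k^α does not attain the Griesmer bound ∑_{i=0}^{k−1} ⌈d/q^i⌉ ≤ n with equality. -/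
/-- When `i < N`, the quotient `(q - 1) * q ^ (N - 1) / q ^ i` is an integer, and its ceiling is a
difference of consecutive powers of `q`. -/
theorem ceil_sub_one_mul_pow_div_pow {q N i : ℕ} (hq : q ≠ 0) (hi : i < N) :
    ⌈((q : ℚ) - 1) * (q : ℚ) ^ (N - 1) / (q : ℚ) ^ i⌉
      = (q : ℤ) ^ (N - i) - (q : ℤ) ^ (N - (i + 1)) := by
  obtain ⟨j, rfl⟩ := Nat.exists_eq_add_of_lt hi
  have hq0 : (q : ℚ) ≠ 0 := Nat.cast_ne_zero.mpr hq
  have h : ((q : ℚ) - 1) * (q : ℚ) ^ (i + j + 1 - 1) / (q : ℚ) ^ i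
      = (((q : ℤ) ^ (j + 1) - (q : ℤ) ^ j : ℤ) : ℚ) := by
    rw [Nat.add_sub_cancel, div_eq_iff (pow_ne_zero i hq0)]
    push_cast
    ring
  rw [h, Int.ceil_intCast, show i + j + 1 - i = j + 1 by lia,
    show i + j + 1 - (i + 1) = j by lia]

/-- The Griesmer sum of `m` terms for `d = (q - 1) * q ^ (N - 1)` telescopes when `m ≤ N`. -/
theorem sum_ceil_sub_one_mul_pow_div_pow {q N m : ℕ} (hq : q ≠ 0) (hm : m ≤ N) :
    ∑ i ∈ Finset.range m, ⌈((q : ℚ) - 1) * (q : ℚ) ^ (N - 1) / (q : ℚ) ^ i⌉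
      = (q : ℤ) ^ N - (q : ℤ) ^ (N - m) := by
  rw [Finset.sum_congr rfl fun i hi ↦
    ceil_sub_one_mul_pow_div_pow hq ((Finset.mem_range.mp hi).trans_le hm),
    Finset.sum_range_sub' fun i ↦ (q : ℤ) ^ (N - i), Nat.sub_zero]

/-- For integers `q ≥ 2`, `s ≥ 1`, `k ≥ 1`,
`∑_{i=0}^{k−1} ⌈(q−1)·q^(sk−1)/q^i⌉ = q^(sk) − q^((s−1)k) < q^(sk)`. Consequently, since
`(q−1)·q^(sk−1)` is the minimum Hamming distance of `S_k^α` and `q^(sk)` is its length, the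
linear simplex α code does not attain the Griesmer bound with equality. -/
theorem stmt_18 (q s k : ℕ) (hq : 2 ≤ q) (hs : 1 ≤ s) (hk : 1 ≤ k) :
    (∑ i ∈ Finset.range k, ⌈(((q : ℚ) - 1) * (q : ℚ) ^ (s * k - 1) / (q : ℚ) ^ i)⌉
      = (q : ℤ) ^ (s * k) - (q : ℤ) ^ ((s - 1) * k)) ∧
    (q : ℤ) ^ (s * k) - (q : ℤ) ^ ((s - 1) * k) < (q : ℤ) ^ (s * k) := by
  constructor
  · rw [sum_ceil_sub_one_mul_pow_div_pow (by lia) (Nat.le_mul_of_pos_left k hs),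
      Nat.sub_one_mul]
  · exact sub_lt_self _ (by positivity)
end

section
/- Let p be a prime, s ≥ 1, k ≥ 1, and let R = Z_{p^s} (the integers modulo p^s). For every nonzero x ∈ R^k with additive order m = ord(x) (the least positive integer m with m·x = 0, a power of p dividing p^s), the number of v ∈ R^k with x·v ≠ 0 equals p^(sk) − (p^s/m)·p^(s(k−1)). That is, the Hamming weight of every nonzero codeword c of the Z_{p^s}-additive simplex α code S_k^α is p^(sk) − (p^s/ord(c))·p^(s(k−1)). -/
/-- The image of `v ↦ ∑ i, x i * v i` over `ZMod n` has as many elements as the additive order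
of `x`. -/
lemma card_range_dotProduct {ι : Type*} [Fintype ι] {n : ℕ} (x : ι → ZMod n) :
    Nat.card (dotProductBilin (ZMod n) (ZMod n) x).toAddMonoidHom.range = addOrderOf x := by
  classical
  rw [← IsAddCyclic.exponent_eq_card]
  refine Nat.dvd_right_iff_eq.mp fun d ↦ ?_
  rw [AddMonoid.exponent_dvd_iff_forall_nsmul_eq_zero, addOrderOf_dvd_iff_nsmul_eq_zero]
  constructor
  · intro h
    ext i
    simpa using congrArg Subtype.val (h ⟨_, Pi.single i 1, rfl⟩)
  · rintro h ⟨_, v, rfl⟩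
    ext1
    simpa [smul_dotProduct, -nsmul_eq_mul] using congrArg (· ⬝ᵥ v) h

/-- The number of zeros of the linear form `v ↦ ∑ i, x i * v i` on `(ZMod n) ^ k`, multiplied by the
additive order of `x`. -/
lemma card_dotProduct_eq_zero_mul_addOrderOf {n k : ℕ} (x : Fin k → ZMod n) :
    Nat.card {v : Fin k → ZMod n // ∑ i, x i * v i = 0} * addOrderOf x = n ^ k := by
  have h := (dotProductBilin (ZMod n) (ZMod n) x).toAddMonoidHom.ker.card_mul_index
  rw [AddSubgroup.index_ker, card_range_dotProduct] at h
  simpa [Nat.card_fun, dotProduct] using h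

/-- For `R = Z_{p^s}` and nonzero `x ∈ R^k` of additive order `m`, the
Hamming weight of the codeword `(x·v)_{v∈R^k}` of the `Z_{p^s}`-additive simplex α code
`S_k^α` equals `p^(sk) − (p^s/m)·p^(s(k−1))`. -/
theorem stmt_19 (p : ℕ) (hp : p.Prime) (s k : ℕ) (hs : 1 ≤ s) (hk : 1 ≤ k)
    (x : Fin k → ZMod (p ^ s)) (hx : x ≠ 0)
    (m : ℕ) (hm : m = addOrderOf x) :
    Nat.card {v : Fin k → ZMod (p ^ s) // ∑ i, x i * v i ≠ 0}
      = p ^ (s * k) - (p ^ s / m) * p ^ (s * (k - 1)) := by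
  classical
  subst hm
  have : NeZero (p ^ s) := ⟨pow_ne_zero s hp.ne_zero⟩
  have hdvd : addOrderOf x ∣ p ^ s := by
    rw [addOrderOf_dvd_iff_nsmul_eq_zero]
    ext i
    simp only [Pi.smul_apply, nsmul_eq_mul, CharP.cast_eq_zero, zero_mul, Pi.zero_apply]
  have hzero : Nat.card {v : Fin k → ZMod (p ^ s) // ∑ i, x i * v i = 0}
      = p ^ s / addOrderOf x * p ^ (s * (k - 1)) := by
    apply Nat.eq_of_mul_eq_mul_right (addOrderOf_pos x)
    rw [card_dotProduct_eq_zero_mul_addOrderOf, mul_right_comm, Nat.div_mul_cancel hdvd, pow_mul,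
      mul_pow_sub_one (by lia)]
  rw [← hzero]
  simp only [Nat.card_eq_fintype_card, ne_eq]
  rw [Fintype.card_subtype_compl]
  simp [pow_mul]
end
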